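/- For every α : ℕ → {0,1,2}, every n ∈ ℕ, and every x ∈ [0,1] ⊆ ℝ: if |x − Φ(ρ(α))| < 2^(−(n+5)), then there exists γ : ℕ → {0,1,2} whose initial segment of length n equals that of ρ(α) and such that x = Φ(γ). -/

import Mathlib

open Filter

/-- `triN s` : numbering of the nodes of the ternary tree:
`N(⟨⟩) = 1`, `N(s * ⟨i⟩) = 2 * N(s) + i - 1`. -/
def triN (s : List (Fin 3)) : ℕ := s.foldl (fun a i => 2 * a + i.val - 1) 1

/-- Initial segment of length `n` of `α`. -/
def seg3 (α : ℕ → Fin 3) (n : ℕ) : List (Fin 3) := List.ofFn fun i : Fin n => α i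

/-- `Phi α` is the limit of the Cauchy sequence `x_α^n = 2^(-(n+1)) * N(ᾱ n)`. -/
noncomputable def Phi (α : ℕ → Fin 3) : ℝ :=
  limUnder atTop fun n => (triN (seg3 α n) : ℝ) / 2 ^ (n + 1)

/-- `rho3` is the identity on triples over `{0,1,2}` except on four patterns. -/
def rho3 : Fin 3 × Fin 3 × Fin 3 → Fin 3 × Fin 3 × Fin 3 := fun t =>
  if t = (1, 2, 2) then (2, 0, 2)
  else if t = (1, 0, 0) then (0, 2, 0)
  else if t = (0, 2, 2) then (1, 0, 2)
  else if t = (2, 0, 0) then (1, 2, 0)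
  else t

/-- The auxiliary triples `σ^n_α`. -/
def sigAux (α : ℕ → Fin 3) : ℕ → Fin 3 × Fin 3 × Fin 3
  | 0 => rho3 (α 0, α 1, α 2)
  | n + 1 => rho3 ((sigAux α n).2.1, α (n + 2), α (n + 3))

/-- The map `ρ : {0,1,2}^ℕ → {0,1,2}^ℕ`, `ρ(α)(n) = (σ^n_α)₀`. -/
def rho (α : ℕ → Fin 3) (n : ℕ) : Fin 3 := (sigAux α n).1



lemma aux_seg_succ (α : ℕ → Fin 3) (n : ℕ) : seg3 α (n + 1) = seg3 α n ++ [α n] := by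
  rw [seg3, List.ofFn_succ_last]; rfl

lemma aux_triN_succ (α : ℕ → Fin 3) (n : ℕ) :
    triN (seg3 α (n + 1)) = 2 * triN (seg3 α n) + (α n).val - 1 := by
  rw [aux_seg_succ]; simp [triN]

lemma aux_triN_pos (α : ℕ → Fin 3) (n : ℕ) : 1 ≤ triN (seg3 α n) := by
  induction n with
  | zero => simp [seg3, triN]
  | succ n ih => rw [aux_triN_succ]; omega

lemma aux_zero (α : ℕ → Fin 3) : ((triN (seg3 α 0) : ℕ) : ℝ) = 1 := by
  simp [seg3, triN]

lemma aux_succ (α : ℕ → Fin 3) (n : ℕ) :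
    (triN (seg3 α (n + 1)) : ℝ) = 2 * triN (seg3 α n) + ((α n).val : ℝ) - 1 := by
  have h := aux_triN_succ α n
  have h1 := aux_triN_pos α n
  have h2 : triN (seg3 α (n + 1)) + 1 = 2 * triN (seg3 α n) + (α n).val := by omega
  have h3 : ((triN (seg3 α (n + 1)) : ℝ) + 1) = 2 * triN (seg3 α n) + ((α n).val : ℝ) := by
    exact_mod_cast h2
  linarith

lemma aux_dig (d : Fin 3) : (0 : ℝ) ≤ (d.val : ℝ) ∧ (d.val : ℝ) ≤ 2 := by
  refine ⟨by positivity, ?_⟩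
  have : d.val ≤ 2 := by omega
  exact_mod_cast this

lemma aux_mono (α : ℕ → Fin 3) :
    Monotone fun n => ((triN (seg3 α n) : ℝ) - 1) / 2 ^ (n + 1) := by
  refine monotone_nat_of_le_succ fun n => ?_
  have := aux_dig (α n)
  rw [aux_succ, pow_succ _ (n + 1), div_le_div_iff₀ (by positivity) (by positivity)]
  have hp : (0 : ℝ) < 2 ^ (n + 1) := by positivity
  nlinarith

lemma aux_anti (α : ℕ → Fin 3) :
    Antitone fun n => ((triN (seg3 α n) : ℝ) + 1) / 2 ^ (n + 1) := by
  refine antitone_nat_of_succ_le fun n => ?_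
  have := aux_dig (α n)
  rw [aux_succ, pow_succ _ (n + 1), div_le_div_iff₀ (by positivity) (by positivity)]
  have hp : (0 : ℝ) < 2 ^ (n + 1) := by positivity
  nlinarith

lemma aux_inv_tendsto : Tendsto (fun n : ℕ => (1 : ℝ) / 2 ^ (n + 1)) atTop (nhds 0) := by
  have h := tendsto_pow_atTop_nhds_zero_of_lt_one (r := (1 / 2 : ℝ)) (by norm_num) (by norm_num)
  have h2 := (tendsto_add_atTop_iff_nat 1).2 h
  simpa using h2

lemma aux_tendsto (α : ℕ → Fin 3) :
    Tendsto (fun n => (triN (seg3 α n) : ℝ) / 2 ^ (n + 1)) atTop (nhds (Phi α)) := by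
  have hb : BddAbove (Set.range fun n => ((triN (seg3 α n) : ℝ) - 1) / 2 ^ (n + 1)) := by
    refine ⟨1, ?_⟩
    rintro _ ⟨n, rfl⟩
    have h1 : ((triN (seg3 α n) : ℝ) + 1) / 2 ^ (n + 1) ≤ _ := aux_anti α (Nat.zero_le n)
    have h2 : ((triN (seg3 α n) : ℝ) - 1) / 2 ^ (n + 1)
        ≤ ((triN (seg3 α n) : ℝ) + 1) / 2 ^ (n + 1) := by gcongr; linarith
    simp only [aux_zero] at h1
    norm_num at h1
    exact h2.trans h1
  have h := (tendsto_atTop_ciSup (aux_mono α) hb).add aux_inv_tendsto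
  refine tendsto_nhds_limUnder ⟨_, h.congr fun n => ?_⟩
  rw [← add_div]; congr 1; ring

lemma aux_le (α : ℕ → Fin 3) (n : ℕ) : Phi α ≤ ((triN (seg3 α n) : ℝ) + 1) / 2 ^ (n + 1) := by
  have h := (aux_tendsto α).add aux_inv_tendsto
  rw [add_zero] at h
  refine (aux_anti α).le_of_tendsto (h.congr fun n => ?_) n
  rw [← add_div]

lemma aux_ge (α : ℕ → Fin 3) (n : ℕ) : ((triN (seg3 α n) : ℝ) - 1) / 2 ^ (n + 1) ≤ Phi α := by
  have h := (aux_tendsto α).sub aux_inv_tendsto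
  rw [sub_zero] at h
  refine (aux_mono α).ge_of_tendsto (h.congr fun n => ?_) n
  rw [← sub_div]

/-- Greedy remainders. -/
noncomputable def auxR (r : ℝ) : ℕ → ℝ
  | 0 => r
  | k + 1 => if 0 ≤ auxR r k then 2 * auxR r k - 1 else 2 * auxR r k + 1

lemma auxR_bound (r : ℝ) (h : -1 ≤ r ∧ r ≤ 1) (k : ℕ) : -1 ≤ auxR r k ∧ auxR r k ≤ 1 := by
  induction k with
  | zero => exact h
  | succ k ih =>
    rw [auxR]
    split_ifs with h0
    · constructor <;> linarith
    · push Not at h0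
      constructor <;> linarith

lemma aux_exists (β : ℕ → Fin 3) (n : ℕ) (x : ℝ)
    (h1 : ((triN (seg3 β n) : ℝ) - 1) / 2 ^ (n + 1) ≤ x)
    (h2 : x ≤ ((triN (seg3 β n) : ℝ) + 1) / 2 ^ (n + 1)) :
    ∃ γ : ℕ → Fin 3, (∀ i < n, γ i = β i) ∧ x = Phi γ := by
  have hp : (0 : ℝ) < 2 ^ (n + 1) := by positivity
  rw [div_le_iff₀ hp] at h1
  rw [le_div_iff₀ hp] at h2
  set r : ℝ := x * 2 ^ (n + 1) - triN (seg3 β n) with hr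
  have hR := auxR_bound r ⟨by linarith, by linarith⟩
  let γ : ℕ → Fin 3 := fun i =>
    if i < n then β i else if 0 ≤ auxR r (i - n) then 2 else 0
  have hγ : ∀ i < n, γ i = β i := fun i hi => by simp [γ, hi]
  refine ⟨γ, hγ, ?_⟩
  have hseg : seg3 γ n = seg3 β n := by
    simp only [seg3]
    congr 1
    funext i
    exact hγ i i.2
  have key : ∀ k, (triN (seg3 γ (k + n)) : ℝ) = x * 2 ^ (k + n + 1) - auxR r k := by
    intro k
    induction k with
    | zero => simp only [Nat.zero_add, hseg, auxR, hr]; ring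
    | succ k ih =>
      have e : k + 1 + n = (k + n) + 1 := by ring
      rw [e, aux_succ, ih, auxR]
      by_cases h0 : 0 ≤ auxR r k
      · simp [γ, h0]; ring
      · simp [γ, h0]; ring
  have ht := (tendsto_add_atTop_iff_nat n).2 (aux_tendsto γ)
  have hz : Tendsto (fun k : ℕ => (1 : ℝ) / 2 ^ (k + n + 1)) atTop (nhds 0) :=
    (tendsto_add_atTop_iff_nat n).2 aux_inv_tendsto
  have hx : Tendsto (fun k => (triN (seg3 γ (k + n)) : ℝ) / 2 ^ (k + n + 1)) atTop (nhds x) := by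
    rw [tendsto_iff_dist_tendsto_zero]
    refine squeeze_zero (fun _ => dist_nonneg) (fun k => ?_) hz
    have hq : (0 : ℝ) < 2 ^ (k + n + 1) := by positivity
    rw [key, Real.dist_eq, sub_div, mul_div_cancel_right₀ _ hq.ne', sub_sub_cancel_left, abs_neg,
      abs_div, abs_of_pos hq]
    gcongr
    exact abs_le.2 (hR k)
  exact tendsto_nhds_unique hx ht

/-- The first input of the `n`-th application of `rho3`. -/
def auxC (α : ℕ → Fin 3) : ℕ → Fin 3
  | 0 => α 0
  | n + 1 => (sigAux α n).2.1

lemma aux_sig (α : ℕ → Fin 3) (n : ℕ) :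
    sigAux α n = rho3 (auxC α n, α (n + 1), α (n + 2)) := by
  cases n <;> rfl

lemma aux_rho (α : ℕ → Fin 3) (n : ℕ) :
    rho α n = (rho3 (auxC α n, α (n + 1), α (n + 2))).1 := by
  rw [rho, aux_sig]

lemma aux_C (α : ℕ → Fin 3) (n : ℕ) :
    auxC α (n + 1) = (rho3 (auxC α n, α (n + 1), α (n + 2))).2.1 := by
  rw [auxC, aux_sig]

lemma aux_back (d : Fin 3) (hd : d = 0 ∨ d = 2) (α : ℕ → Fin 3) (n : ℕ)
    (h : auxC α n = d ∧ α (n + 1) = d) : ∀ i < n, rho α i = d := by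
  have tab : ∀ d : Fin 3, d = 0 ∨ d = 2 → ∀ a b : Fin 3, (rho3 (a, b, d)).2.1 = d →
      a = d ∧ b = d ∧ (rho3 (a, b, d)).1 = d := by decide
  induction n with
  | zero => intro i hi; omega
  | succ n ih =>
    obtain ⟨h1, h2⟩ := h
    rw [aux_C, h2] at h1
    obtain ⟨ha, hb, hc⟩ := tab d hd _ _ h1
    intro i hi
    rcases Nat.lt_succ_iff_lt_or_eq.1 hi with h | rfl
    · exact ih ⟨ha, hb⟩ i h
    · rw [aux_rho, h2, hc]

lemma aux_four (d : Fin 3) (hd : d = 0 ∨ d = 2) (α : ℕ → Fin 3) (n : ℕ)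
    (h0 : rho α n = d) (h1 : rho α (n + 1) = d) (h2 : rho α (n + 2) = d)
    (_h3 : rho α (n + 3) = d) : ∀ i < n, rho α i = d := by
  have tab1 : ∀ d : Fin 3, d = 0 ∨ d = 2 → ∀ a b c : Fin 3, (rho3 (a, b, c)).1 = d →
      (a = d ∧ b = (rho3 (a, b, c)).2.1) ∨ (a = 1 ∧ (rho3 (a, b, c)).2.1 = 2 - d) := by decide
  have tab2 : ∀ d : Fin 3, d = 0 ∨ d = 2 → ∀ b c : Fin 3, (rho3 (2 - d, b, c)).1 ≠ d := by decide
  have step : ∀ m, rho α m = d → rho α (m + 1) = d →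
      auxC α m = d ∧ α (m + 1) = auxC α (m + 1) := by
    intro m hm hm1
    rw [aux_rho] at hm hm1
    rcases tab1 d hd _ _ _ hm with h | h
    · rw [aux_C]; exact h
    · rw [aux_C, h.2] at hm1
      exact absurd hm1 (tab2 d hd _ _)
  have s0 := step n h0 h1
  have s1 := step (n + 1) h1 h2
  exact aux_back d hd α n ⟨s0.1, s0.2.trans s1.1⟩

lemma aux_all_two (β : ℕ → Fin 3) (n : ℕ) (h : ∀ i < n, β i = 2) :
    (triN (seg3 β n) : ℝ) + 1 = 2 ^ (n + 1) := by
  induction n with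
  | zero => rw [aux_zero]; norm_num
  | succ n ih =>
    have := ih fun i hi => h i (by omega)
    rw [aux_succ, h n (by omega), pow_succ, ← this]
    norm_num; ring

lemma aux_all_zero (β : ℕ → Fin 3) (n : ℕ) (h : ∀ i < n, β i = 0) :
    (triN (seg3 β n) : ℝ) - 1 = 0 := by
  induction n with
  | zero => rw [aux_zero]; norm_num
  | succ n ih =>
    have := ih fun i hi => h i (by omega)
    rw [aux_succ, h n (by omega)]
    norm_num; linarith

theorem stmt8 (α : ℕ → Fin 3) (n : ℕ) (x : ℝ) (hx : x ∈ Set.Icc (0 : ℝ) 1)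
    (h : |x - Phi (rho α)| < 1 / 2 ^ (n + 5)) :
    ∃ γ : ℕ → Fin 3, (∀ i < n, γ i = rho α i) ∧ x = Phi γ := by
  obtain ⟨hl, hu⟩ := abs_lt.1 h
  have hp : (0 : ℝ) < 2 ^ (n + 1) := by positivity
  have hq : (0 : ℝ) < 2 ^ (n + 5) := by positivity
  have hpq : (2 : ℝ) ^ (n + 5) = 16 * 2 ^ (n + 1) := by ring
  have e4 := aux_succ (rho α) (n + 3)
  have e3 := aux_succ (rho α) (n + 2)
  have e2 := aux_succ (rho α) (n + 1)
  have e1 := aux_succ (rho α) n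
  simp only [add_assoc, Nat.reduceAdd] at e4 e3 e2 e1
  rw [e3, e2, e1] at e4
  have b0 := (rho α n).isLt
  have b1 := (rho α (n + 1)).isLt
  have b2 := (rho α (n + 2)).isLt
  have b3 := (rho α (n + 3)).isLt
  apply aux_exists
  · by_contra! hc
    have h4 := aux_ge (rho α) (n + 4)
    have h5 : ((triN (seg3 (rho α) (n + 4)) : ℝ) - 1) / 2 ^ (n + 5)
        < ((triN (seg3 (rho α) n) : ℝ) - 1) / 2 ^ (n + 1) + 1 / 2 ^ (n + 5) := by
      linarith
    have h6 : ((triN (seg3 (rho α) n) : ℝ) - 1) / 2 ^ (n + 1) + 1 / 2 ^ (n + 5)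
        = (16 * ((triN (seg3 (rho α) n) : ℝ) - 1) + 1) / 2 ^ (n + 5) := by
      rw [hpq]; field_simp
    rw [h6, div_lt_div_iff_of_pos_right hq, e4] at h5
    have h7 : (8 * ((rho α n).val : ℝ) + 4 * ((rho α (n + 1)).val : ℝ)
        + 2 * ((rho α (n + 2)).val : ℝ) + ((rho α (n + 3)).val : ℝ)) < 1 := by linarith
    have h8 : 8 * (rho α n).val + 4 * (rho α (n + 1)).val
        + 2 * (rho α (n + 2)).val + (rho α (n + 3)).val < 1 := by exact_mod_cast h7
    have hz := aux_all_zero (rho α) n (aux_four 0 (Or.inl rfl) α n (Fin.ext (by simp; omega))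
      (Fin.ext (by simp; omega)) (Fin.ext (by simp; omega)) (Fin.ext (by simp; omega)))
    rw [hz, zero_div] at hc
    linarith [hx.1]
  · by_contra! hc
    have h4 := aux_le (rho α) (n + 4)
    have h5 : ((triN (seg3 (rho α) n) : ℝ) + 1) / 2 ^ (n + 1) - 1 / 2 ^ (n + 5)
        < ((triN (seg3 (rho α) (n + 4)) : ℝ) + 1) / 2 ^ (n + 5) := by
      linarith
    have h6 : ((triN (seg3 (rho α) n) : ℝ) + 1) / 2 ^ (n + 1) - 1 / 2 ^ (n + 5)
        = (16 * ((triN (seg3 (rho α) n) : ℝ) + 1) - 1) / 2 ^ (n + 5) := by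
      rw [hpq]; field_simp
    rw [h6, div_lt_div_iff_of_pos_right hq, e4] at h5
    have h7 : 29 < (8 * ((rho α n).val : ℝ) + 4 * ((rho α (n + 1)).val : ℝ)
        + 2 * ((rho α (n + 2)).val : ℝ) + ((rho α (n + 3)).val : ℝ)) := by linarith
    have h8 : 29 < 8 * (rho α n).val + 4 * (rho α (n + 1)).val
        + 2 * (rho α (n + 2)).val + (rho α (n + 3)).val := by exact_mod_cast h7
    have hz := aux_all_two (rho α) n (aux_four 2 (Or.inr rfl) α n (Fin.ext (by simp; omega))
      (Fin.ext (by simp; omega)) (Fin.ext (by simp; omega)) (Fin.ext (by simp; omega)))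
    rw [hz, div_self hp.ne'] at hc
    linarith [hx.2]
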